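/- For a C⁴ function φ and the linear ghost-value extrapolation φ^G = (φ_D + (θ-1)φ(x_i))/θ with φ_D = φ(x_i + θΔ), the truncation error of the modified second-difference operator, τ = φ''(x_i) - (φ(x_{i-1}) - 2φ(x_i) + φ^G)/Δ² with the boundary term scaled appropriately, has leading term (1/2)(1-θ)φ''(x_i), i.e. τ - (1/2)(1-θ)φ''(x_i) = O(Δ) as Δ → 0. -/

import Mathlib

open Filter Topology Asymptotics

/-!
The operator is a three-point stencil with nodes `-1, 0, θ` and weights `1, -(1 + θ⁻¹), θ⁻¹`.
By Taylor's theorem a stencil approximates derivatives through its moments, and here the moments of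
order `0, 1, 2` are `0, 0, 1 + θ`. The scheme therefore approximates `(1 + θ) / 2 • φ''`, which
misses `φ''` by `(1 - θ) / 2 • φ''`.
-/

section FiniteDifference

variable {E : Type*} [NormedAddCommGroup E] [NormedSpace ℝ E] {f : ℝ → E} {x : ℝ}

theorem taylor_isLittleO_of_contDiffAt {n : ℕ} (hf : ContDiffAt ℝ n f x) :
    (fun h ↦ f (x + h) - ∑ k ∈ Finset.range (n + 1),
      (h ^ k / k.factorial) • iteratedDeriv k f x) =o[𝓝 0] (· ^ n) := by
  obtain ⟨u, hu, hfu⟩ := hf.contDiffOn le_rfl (by simp)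
  obtain ⟨ε, hε, hball⟩ := Metric.mem_nhds_iff.mp hu
  have hxball : x ∈ Metric.ball x ε := Metric.mem_ball_self hε
  have htaylor := taylor_isLittleO (convex_ball x ε) hxball (hfu.mono hball)
  rw [Metric.isOpen_ball.nhdsWithin_eq hxball] at htaylor
  have hshift : Tendsto (x + ·) (𝓝 0) (𝓝 x) := by
    simpa using (continuous_const_add x).tendsto 0
  refine (htaylor.comp_tendsto hshift).congr (fun h ↦ ?_) (fun h ↦ by simp)
  simp only [Function.comp_apply, taylor_within_apply, add_sub_cancel_left]
  congr 1
  refine Finset.sum_congr rfl fun k hk ↦ ?_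
  have hkn : k ≤ n := Nat.lt_succ_iff.mp (Finset.mem_range.mp hk)
  rw [iteratedDerivWithin_eq_iteratedDeriv Metric.isOpen_ball.uniqueDiffOn
    (hf.of_le (by exact_mod_cast hkn)) hxball, inv_mul_eq_div]

theorem taylor_isBigO_of_contDiffAt {n : ℕ} (hf : ContDiffAt ℝ n f x) :
    (fun h ↦ f (x + h) - ∑ k ∈ Finset.range n,
      (h ^ k / k.factorial) • iteratedDeriv k f x) =O[𝓝 0] (· ^ n) := by
  have htop : (fun h : ℝ ↦ (h ^ n / n.factorial) • iteratedDeriv n f x) =O[𝓝 0] (· ^ n) :=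
    .of_bound ‖((n.factorial : ℝ)⁻¹) • iteratedDeriv n f x‖ <| .of_forall fun h ↦ by
      rw [div_eq_mul_inv, mul_smul, norm_smul, mul_comm]
  refine ((taylor_isLittleO_of_contDiffAt hf).isBigO.add htop).congr_left fun h ↦ ?_
  rw [Finset.sum_range_succ]
  abel

section Stencil

variable {ι : Type*} [Fintype ι] (w c : ι → ℝ)

/-- The value at `x` of the finite-difference stencil with weights `w` and nodes `x + c i * h`,
without normalization by a power of the step `h`. -/
noncomputable def stencil (f : ℝ → E) (x h : ℝ) : E := ∑ i, w i • f (x + c i * h)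

/-- The moment of order `k` of the stencil with weights `w` and relative nodes `c`; it governs
the coefficient of the `k`-th derivative in the expansion of the stencil. -/
noncomputable def stencilMoment (k : ℕ) : ℝ := ∑ i, w i * c i ^ k

theorem stencil_sub_sum_stencilMoment_isBigO {n : ℕ} (hf : ContDiffAt ℝ n f x) :
    (fun h ↦ stencil w c f x h - ∑ k ∈ Finset.range n,
      (h ^ k / k.factorial * stencilMoment w c k) • iteratedDeriv k f x) =O[𝓝 0] (· ^ n) := by
  have hnode (a : ℝ) : (fun h ↦ f (x + a * h) - ∑ k ∈ Finset.range n,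
      ((a * h) ^ k / k.factorial) • iteratedDeriv k f x) =O[𝓝 0] (· ^ n) := by
    have hscale : Tendsto (a * ·) (𝓝 0) (𝓝 0) := by
      simpa using (continuous_const_mul a).tendsto 0
    refine ((taylor_isBigO_of_contDiffAt hf).comp_tendsto hscale).trans ?_
    simpa only [Function.comp_def, mul_pow] using isBigO_const_mul_self (a ^ n) (· ^ n) (𝓝 0)
  refine (IsBigO.sum (s := Finset.univ)
    fun i _ ↦ (hnode (c i)).const_smul_left (w i)).congr_left fun h ↦ ?_
  simp only [stencil, stencilMoment, Finset.sum_apply, Pi.smul_apply, smul_sub,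
    Finset.sum_sub_distrib, Finset.smul_sum, Finset.mul_sum, Finset.sum_smul, smul_smul]
  rw [Finset.sum_comm]
  congr! 4
  ring

theorem inv_pow_smul_stencil_sub_isBigO {m : ℕ} (hf : ContDiffAt ℝ (m + 1 : ℕ) f x)
    (hvanish : ∀ k < m, stencilMoment w c k = 0) :
    (fun h ↦ (h ^ m)⁻¹ • stencil w c f x h
      - (stencilMoment w c m / m.factorial) • iteratedDeriv m f x) =O[𝓝[≠] 0] (fun h ↦ h) := by
  have hexpansion := (stencil_sub_sum_stencilMoment_isBigO w c hf).mono
    (nhdsWithin_le_nhds (s := {0}ᶜ))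
  refine ((isBigO_refl (fun h : ℝ ↦ (h ^ m)⁻¹) _).smul hexpansion).congr' ?_ ?_ <;>
    filter_upwards [self_mem_nhdsWithin] with h (hh : h ≠ 0)
  · have hlower : ∑ k ∈ Finset.range m,
        (h ^ k / k.factorial * stencilMoment w c k) • iteratedDeriv k f x = 0 :=
      Finset.sum_eq_zero fun k hk ↦ by
        rw [hvanish k (Finset.mem_range.mp hk), mul_zero, zero_smul]
    rw [Finset.sum_range_succ, hlower, zero_add, smul_sub, smul_smul]
    congr 2
    field_simp
  · rw [smul_eq_mul, pow_succ, inv_mul_cancel_left₀ (pow_ne_zero m hh)]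

end Stencil

/-- Nodes of the scheme relative to `x`, in units of the grid step: the left neighbour, the node
itself, and the boundary point. -/
def ghostNode (θ : ℝ) : Fin 3 → ℝ := ![-1, 0, θ]

/-- Weights, in the order of `ghostNode`, of the second difference in which the right neighbour is
replaced by the linear ghost value `θ⁻¹ • (φ_D + (θ - 1) • φ x)`. -/
noncomputable def ghostWeight (θ : ℝ) : Fin 3 → ℝ := ![1, -(1 + θ⁻¹), θ⁻¹]

theorem stencil_ghost {θ : ℝ} (hθ : θ ≠ 0) (f : ℝ → E) (x h : ℝ) :
    stencil (ghostWeight θ) (ghostNode θ) f x h =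
      f (x - h) - (2 : ℝ) • f x + θ⁻¹ • (f (x + θ * h) + (θ - 1) • f x) := by
  simp only [stencil, ghostWeight, ghostNode, Fin.sum_univ_three, Matrix.cons_val,
    neg_one_mul, zero_mul, add_zero, ← sub_eq_add_neg]
  match_scalars <;> field_simp
  ring

theorem stencilMoment_ghost_of_lt_two {θ : ℝ} (hθ : θ ≠ 0) {k : ℕ} (hk : k < 2) :
    stencilMoment (ghostWeight θ) (ghostNode θ) k = 0 := by
  interval_cases k <;> simp [stencilMoment, ghostWeight, ghostNode, Fin.sum_univ_three, hθ]

theorem stencilMoment_ghost_two {θ : ℝ} (hθ : θ ≠ 0) :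
    stencilMoment (ghostWeight θ) (ghostNode θ) 2 = 1 + θ := by
  simp [stencilMoment, ghostWeight, ghostNode, Fin.sum_univ_three, sq, hθ]

theorem stmt_2_general {φ : ℝ → E} {x θ : ℝ} (hφ : ContDiffAt ℝ 3 φ x) (hθ : θ ≠ 0) :
    (fun Δ : ℝ ↦
        (iteratedDeriv 2 φ x -
          (Δ ^ 2)⁻¹ • (φ (x - Δ) - (2 : ℝ) • φ x + θ⁻¹ • (φ (x + θ * Δ) + (θ - 1) • φ x))) -
        ((1 / 2) * (1 - θ)) • iteratedDeriv 2 φ x)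
      =O[𝓝[≠] 0] (fun Δ : ℝ ↦ Δ) := by
  have hconsistency := inv_pow_smul_stencil_sub_isBigO (ghostWeight θ) (ghostNode θ) (m := 2) hφ
    fun _ ↦ stencilMoment_ghost_of_lt_two hθ
  refine hconsistency.neg_left.congr_left fun Δ ↦ ?_
  rw [stencil_ghost hθ, stencilMoment_ghost_two hθ, Nat.factorial_two]
  push_cast
  module

end FiniteDifference

theorem stmt_2 (φ : ℝ → ℝ) (hφ : ContDiff ℝ 4 φ) (x θ : ℝ) (hθ : θ ∈ Set.Ioc (0:ℝ) 1) :
    (fun Δ : ℝ =>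
        (iteratedDeriv 2 φ x -
          (φ (x - Δ) - 2 * φ x + (φ (x + θ * Δ) + (θ - 1) * φ x) / θ) / Δ ^ 2) -
        (1 / 2) * (1 - θ) * iteratedDeriv 2 φ x)
      =O[𝓝[>] 0] (fun Δ : ℝ => Δ) := by
  simpa only [smul_eq_mul, inv_mul_eq_div] using
    (stmt_2_general (hφ.of_le (by norm_num)).contDiffAt hθ.1.ne').mono (nhdsGT_le_nhdsNE 0)
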